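/- arXiv:2103.16691 — 2 statements merged into one kernel-verified Lean document; each statement's English description precedes it below -/
import Mathlib

section
/- Let Δ_A = −27x⁶y⁶ + α²β² + 18x³y³αβ − 4x³β³ − 4y³α³, a central element of the binary cubic generic Clifford algebra A, and let A_Δ denote the localization of A at the central multiplicative set {Δ_Aⁿ : n ≥ 0}. Then A_Δ is an Azumaya algebra over its center. -/
noncomputable section

open FreeAlgebra

variable (k : Type*) [Field k]

/-- Relations of the binary cubic generic Clifford algebra. -/
inductive GCRel : FreeAlgebra k (Fin 2) → FreeAlgebra k (Fin 2) → Prop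
  | rel1 : GCRel ((ι k 0) ^ 3 * ι k 1) (ι k 1 * (ι k 0) ^ 3)
  | rel2 : GCRel (ι k 0 * (ι k 1) ^ 3) ((ι k 1) ^ 3 * ι k 0)
  | rel3 : GCRel ((ι k 0) ^ 2 * (ι k 1) ^ 2 + (ι k 0 * ι k 1) ^ 2)
      ((ι k 1) ^ 2 * (ι k 0) ^ 2 + (ι k 1 * ι k 0) ^ 2)

/-- The binary cubic generic Clifford algebra. -/
abbrev GCA := RingQuot (GCRel k)

/-- The generator x. -/
def gx : GCA k := RingQuot.mkAlgHom k (GCRel k) (ι k 0)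

/-- The generator y. -/
def gy : GCA k := RingQuot.mkAlgHom k (GCRel k) (ι k 1)

/-- α = x²y + xyx + yx². -/
def gα : GCA k := gx k ^ 2 * gy k + gx k * gy k * gx k + gy k * gx k ^ 2

/-- β = xy² + yxy + y²x. -/
def gβ : GCA k := gx k * gy k ^ 2 + gy k * gx k * gy k + gy k ^ 2 * gx k

/-- γ = (xy)² − y²x². -/
def gγ : GCA k := (gx k * gy k) ^ 2 - gy k ^ 2 * gx k ^ 2

/-- δ = yx − ω·xy. -/
def gδ (ω : k) : GCA k := gy k * gx k - algebraMap k (GCA k) ω * (gx k * gy k)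

end

/-- The discriminant element Δ_A = −27x⁶y⁶ + α²β² + 18x³y³αβ − 4x³β³ − 4y³α³ of `A`. -/
noncomputable def gΔ (k : Type*) [Field k] : GCA k :=
  -27 * (gx k ^ 6 * gy k ^ 6) + gα k ^ 2 * gβ k ^ 2 +
    18 * (gx k ^ 3 * gy k ^ 3) * (gα k * gβ k) -
    4 * gx k ^ 3 * gβ k ^ 3 - 4 * gy k ^ 3 * gα k ^ 3

open TensorProduct in
/-- The canonical map `B ⊗[R] Bᵐᵒᵖ →ₗ[R] End_R(B)`, `a ⊗ b ↦ (x ↦ a * x * b)`;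
an algebra `B` is Azumaya over `R` iff `B` is a finitely generated projective faithful
`R`-module and this map is bijective. -/
noncomputable def mulLR (R B : Type*) [CommRing R] [Ring B] [Algebra R B] :
    B ⊗[R] Bᵐᵒᵖ →ₗ[R] (B →ₗ[R] B) :=
  TensorProduct.lift <| LinearMap.mk₂ R
    (fun a b =>
      { toFun := fun m => a * m * b.unop
        map_add' := fun u v => by simp [mul_add, add_mul]
        map_smul' := fun r u => by simp [mul_smul_comm, smul_mul_assoc] })
    (fun a₁ a₂ b => by ext m; simp [add_mul])
    (fun r a b => by ext m; simp [smul_mul_assoc])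
    (fun a b₁ b₂ => by ext m; simp [mul_add])
    (fun r a b => by ext m; simp [mul_smul_comm])

/-!
Over its center, `A` is generated by `x` and `y` with `(x + z y)³ = f(z)` for a binary cubic `f`
with central coefficients and discriminant `Δ_A`. Conjugation by `x` splits `y` into a polynomial in
`x` and two Lagrange resolvents `u`, `v`, which satisfy `x u = ω u x`, `x v = ω² v x`, while `u³`,
`v³` and the part of `u v` not involving `x` are central.

Call a tensor in `B ⊗ Bᵒᵖ` Casimir if left and right multiplication by elements of `B` agree on it.
A central algebra is Azumaya as soon as the left ideal `J` generated by the Casimir tensors contains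
`1`. Up to the scalar `3 x³ u³`, the elements `x` and `u` generate `B`, so a multiple of the
separability idempotent of the symbol algebra of `x` and `u` is Casimir, and polarized cubes turn it
into the scalar `(3 x³ u³)³` of `J`. Likewise `(3 x³ v³)³` is in `J`. Since `u³ + v³` is the
constant coefficient of the cubic covariant of `f`, replacing `x` by `x + z y` shows that `f` times
its covariant takes values in the radical of `J ∩ Z(B)`. If `J` were proper, this product of degree
six would vanish at every point of a residue field, which contains `0` and six sixth roots of unity
(the cube roots suffice in characteristic two), and the discriminant would vanish there too.
-/

section RootCounting

open Polynomial

variable {K : Type*} [Field K]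

theorem three_ne_zero_of_isPrimitiveRoot {ω : K} (hω : IsPrimitiveRoot ω 3) : (3 : K) ≠ 0 := by
  simpa using hω.neZero'.ne

theorem isPrimitiveRoot_three_iff (h3 : (3 : K) ≠ 0) {ω : K} :
    IsPrimitiveRoot ω 3 ↔ ω ^ 2 + ω + 1 = 0 := by
  have : NeZero ((3 : ℕ) : K) := ⟨by simpa using h3⟩
  rw [← isRoot_cyclotomic_iff, cyclotomic_three]
  simp [IsRoot.def]

theorem isPrimitiveRoot_six_iff (h2 : (2 : K) ≠ 0) (h3 : (3 : K) ≠ 0) {ζ : K} :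
    IsPrimitiveRoot ζ 6 ↔ ζ ^ 2 - ζ + 1 = 0 := by
  have : NeZero ((6 : ℕ) : K) := ⟨by
    have h : (6 : K) = 2 * 3 := by norm_num
    simpa [h] using ⟨h2, h3⟩⟩
  rw [← isRoot_cyclotomic_iff, cyclotomic_six]
  simp [IsRoot.def]

theorem eq_zero_of_natDegree_le_of_forall_eval_eq_zero {S : Type*} [CommRing S] [IsDomain S]
    {ζ : S} {n : ℕ} [NeZero n] (hζ : IsPrimitiveRoot ζ n) {p : S[X]} (hp : p.natDegree ≤ n)
    (h : ∀ z, p.eval z = 0) : p = 0 := by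
  classical
  have h0 : (0 : S) ∉ nthRootsFinset n (1 : S) := by
    simp [mem_nthRootsFinset (NeZero.pos n), NeZero.ne n]
  refine eq_zero_of_natDegree_lt_card_of_eval_eq_zero' p (insert 0 (nthRootsFinset n (1 : S)))
    (fun z _ ↦ h z) ?_
  rw [Finset.card_insert_of_notMem h0, hζ.card_nthRootsFinset]
  lia

end RootCounting

section Cubic

open Polynomial

variable {R : Type*} [CommRing R]

/-- The Taylor shift of a cubic: the coefficients of `f (z + T)` as a polynomial in `T`. -/
def cubicShift (z : R) (f : Cubic R) : Cubic R :=
  ⟨f.a, f.b + 3 * z * f.a, f.c + 2 * z * f.b + 3 * z ^ 2 * f.a,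
    f.d + z * f.c + z ^ 2 * f.b + z ^ 3 * f.a⟩

/-- The cubic covariant (up to sign, the Jacobian of the associated binary form and its Hessian).
For a Clifford pair its constant coefficient is the sum of the cubes of the two resolvents. -/
def cubicCovariant (f : Cubic R) : Cubic R where
  a := -(27 * f.d * f.a ^ 2 - 9 * f.a * f.b * f.c + 2 * f.b ^ 3)
  b := -(27 * f.d * f.b * f.a - 18 * f.a * f.c ^ 2 + 3 * f.c * f.b ^ 2)
  c := 27 * f.d * f.c * f.a - 18 * f.d * f.b ^ 2 + 3 * f.c ^ 2 * f.b
  d := 27 * f.d ^ 2 * f.a - 9 * f.d * f.c * f.b + 2 * f.c ^ 3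

theorem cubicShift_d (z : R) (f : Cubic R) : (cubicShift z f).d = f.toPoly.eval z := by
  simp only [cubicShift, Cubic.toPoly, eval_add, eval_mul, eval_C, eval_pow, eval_X]
  ring

theorem cubicCovariant_cubicShift_d (z : R) (f : Cubic R) :
    (cubicCovariant (cubicShift z f)).d = (cubicCovariant f).toPoly.eval z := by
  simp only [cubicShift, cubicCovariant, Cubic.toPoly, eval_add, eval_mul, eval_C, eval_pow,
    eval_X]
  ring

theorem map_cubicCovariant {S : Type*} [CommRing S] (ψ : R →+* S) (f : Cubic R) :
    (cubicCovariant f).map ψ = cubicCovariant (f.map ψ) := by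
  simp [Cubic.map, cubicCovariant, map_ofNat]

theorem cubic_discr_map {S : Type*} [CommRing S] (ψ : R →+* S) (f : Cubic R) :
    (f.map ψ).discr = ψ f.discr := by
  simp [Cubic.map, Cubic.discr, map_ofNat]

theorem discr_eq_zero_of_toPoly_eq_zero {f : Cubic R} (hf : f.toPoly = 0) : f.discr = 0 := by
  obtain rfl := (Cubic.toPoly_eq_zero_iff f).1 hf
  have ha : (0 : Cubic R).a = 0 := rfl
  have hb : (0 : Cubic R).b = 0 := rfl
  simp [Cubic.discr, ha, hb]

theorem cubicCovariant_discr (f : Cubic R) : (cubicCovariant f).discr = 729 * f.discr ^ 3 := by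
  simp only [cubicCovariant, Cubic.discr]
  ring

theorem discr_eq_sq_of_two_eq_zero (h2 : (2 : R) = 0) (f : Cubic R) :
    f.discr = (f.a * f.d + f.b * f.c) ^ 2 := by
  simp only [Cubic.discr]
  linear_combination (-2 * f.a * f.c ^ 3 - 2 * f.b ^ 3 * f.d - 14 * f.a ^ 2 * f.d ^ 2
    + 8 * f.a * f.b * f.c * f.d) * h2

theorem eval_cubicCovariant_of_two_eq_zero (h2 : (2 : R) = 0) (f : Cubic R) (z : R) :
    (cubicCovariant f).toPoly.eval z = (f.a * f.d + f.b * f.c) * f.toPoly.eval z := by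
  simp only [cubicCovariant, Cubic.toPoly, eval_add, eval_mul, eval_C, eval_pow, eval_X]
  linear_combination (13 * f.d ^ 2 * f.a - 5 * f.d * f.c * f.b + f.c ^ 3
    + z * (13 * f.d * f.c * f.a - 9 * f.d * f.b ^ 2 + f.c ^ 2 * f.b)
    + z ^ 2 * (-14 * f.a * f.b * f.d + 9 * f.a * f.c ^ 2 - 2 * f.c * f.b ^ 2)
    + z ^ 3 * (-14 * f.a ^ 2 * f.d + 4 * f.a * f.b * f.c - f.b ^ 3)) * h2

variable {K : Type*} [Field K]

theorem discr_eq_zero_of_forall_eval_mul_eval_eq_zero (h3 : (3 : K) ≠ 0) {ω : K}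
    (hω : ω ^ 2 + ω + 1 = 0) {f : Cubic K}
    (h : ∀ z, f.toPoly.eval z * (cubicCovariant f).toPoly.eval z = 0) : f.discr = 0 := by
  by_cases h2 : (2 : K) = 0
  · have hroot := (isPrimitiveRoot_three_iff h3).2 hω
    by_contra hdiscr
    have hs : f.a * f.d + f.b * f.c ≠ 0 := by
      simpa [discr_eq_sq_of_two_eq_zero h2] using hdiscr
    refine hdiscr (discr_eq_zero_of_toPoly_eq_zero ?_)
    refine eq_zero_of_natDegree_le_of_forall_eval_eq_zero hroot natDegree_cubic_le fun z ↦ ?_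
    simpa [eval_cubicCovariant_of_two_eq_zero h2, hs] using h z
  · have hroot : IsPrimitiveRoot (-ω) 6 :=
      (isPrimitiveRoot_six_iff h2 h3).2 (by linear_combination hω)
    have hprod : f.toPoly * (cubicCovariant f).toPoly = 0 := by
      refine eq_zero_of_natDegree_le_of_forall_eval_eq_zero hroot ?_ fun z ↦ ?_
      · exact natDegree_mul_le_of_le natDegree_cubic_le natDegree_cubic_le
      · rw [eval_mul, h z]
    rcases mul_eq_zero.1 hprod with hf | hf
    · exact discr_eq_zero_of_toPoly_eq_zero hf
    · have hcov := discr_eq_zero_of_toPoly_eq_zero hf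
      rw [cubicCovariant_discr, show (729 : K) = 3 ^ 6 by norm_num] at hcov
      simpa [h3] using hcov

theorem ideal_eq_top_of_forall_eval_mul_eval_mem (h3 : IsUnit (3 : R)) {ω : R}
    (hω : ω ^ 2 + ω + 1 = 0) {f : Cubic R} (hf : IsUnit f.discr) {I : Ideal R}
    (h : ∀ z, f.toPoly.eval z * (cubicCovariant f).toPoly.eval z ∈ I) : I = ⊤ := by
  by_contra hI
  obtain ⟨M, hM, hIM⟩ := I.exists_le_maximal hI
  let := Ideal.Quotient.field M
  let π := Ideal.Quotient.mk M
  have h3' : (3 : R ⧸ M) ≠ 0 := by simpa only [map_ofNat] using (h3.map π).ne_zero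
  have hω' : π ω ^ 2 + π ω + 1 = 0 := by simpa using congrArg π hω
  refine (hf.map π).ne_zero ?_
  rw [← cubic_discr_map]
  refine discr_eq_zero_of_forall_eval_mul_eval_eq_zero h3' hω' fun z ↦ ?_
  obtain ⟨r, rfl⟩ := Ideal.Quotient.mk_surjective z
  rw [← map_cubicCovariant, Cubic.map_toPoly, Cubic.map_toPoly, eval_map_apply, eval_map_apply,
    ← map_mul]
  exact Ideal.Quotient.eq_zero_iff_mem.2 (hIM (h r))

end Cubic

section Resolvent

variable {R B : Type*} [CommRing R] [Ring B] [Algebra R B]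

theorem cube_eq_one_of_sq_add_add_one {ω : R} (hω : ω ^ 2 + ω + 1 = 0) : ω ^ 3 = 1 := by
  linear_combination (ω - 1) * hω

/-- The polarization of the cube, `x ^ 2 * y + x * y * x + y * x ^ 2`: the part of `(x + y) ^ 3`
of degree two in `x`. -/
def cubePolar (x y : B) : B :=
  x ^ 2 * y + x * y * x + y * x ^ 2

/-- The element `γ = (x * y) ^ 2 - y ^ 2 * x ^ 2` of the generic Clifford algebra, for arbitrary
`x` and `y`. -/
def cliffordGamma (x y : B) : B :=
  (x * y) ^ 2 - y ^ 2 * x ^ 2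

/-- The Lagrange resolvent of `y` for conjugation by `x`; for invertible `x` it is `x ^ 2` times
the sum of `ζ ^ i • (x ^ (-i) * y * x ^ i)` over `i < 3`. -/
def cubeResolvent (ζ : R) (x y : B) : B :=
  x ^ 2 * y + ζ • (x * y * x) + ζ ^ 2 • (y * x ^ 2)

theorem commute_cubePolar_left {x y : B} (h : Commute (x ^ 3) y) : Commute (cubePolar x y) x := by
  have h' : cubePolar x y * x - x * cubePolar x y = y * x ^ 3 - x ^ 3 * y := by
    simp only [cubePolar]
    noncomm_ring
  rwa [h.eq, sub_self, sub_eq_zero] at h'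

theorem commute_cubePolar_right {x y : B}
    (h : x ^ 2 * y ^ 2 + (x * y) ^ 2 = y ^ 2 * x ^ 2 + (y * x) ^ 2) :
    Commute (cubePolar x y) y := by
  have h' : cubePolar x y * y - y * cubePolar x y =
      x ^ 2 * y ^ 2 + (x * y) ^ 2 - (y ^ 2 * x ^ 2 + (y * x) ^ 2) := by
    simp only [cubePolar]
    noncomm_ring
  rwa [h, sub_self, sub_eq_zero] at h'

theorem cliffordGamma_eq_of_commute {x y : B} (h : Commute (cubePolar x y) y) :
    cliffordGamma x y = (y * x) ^ 2 - x ^ 2 * y ^ 2 := by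
  have h' : cliffordGamma x y - ((y * x) ^ 2 - x ^ 2 * y ^ 2) =
      cubePolar x y * y - y * cubePolar x y := by
    simp only [cubePolar, cliffordGamma]
    noncomm_ring
  rwa [h.eq, sub_self, sub_eq_zero] at h'

theorem commute_cliffordGamma_left {x y : B} (hx : Commute (x ^ 3) y)
    (h : Commute (cubePolar x y) y) : Commute (cliffordGamma x y) x := by
  calc cliffordGamma x y * x = x * y * x * y * x - y ^ 2 * x ^ 3 := by
        simp only [cliffordGamma]
        noncomm_ring
    _ = x * y * x * y * x - x ^ 3 * y ^ 2 := by rw [(hx.pow_right 2).eq]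
    _ = x * cliffordGamma x y := by
        rw [cliffordGamma_eq_of_commute h]
        noncomm_ring

theorem commute_cliffordGamma_right {x y : B} (hy : Commute (y ^ 3) x)
    (h : Commute (cubePolar x y) y) : Commute (cliffordGamma x y) y := by
  calc cliffordGamma x y * y = y * x * y * x * y - x ^ 2 * y ^ 3 := by
        rw [cliffordGamma_eq_of_commute h]
        noncomm_ring
    _ = y * x * y * x * y - y ^ 3 * x ^ 2 := by rw [(hy.pow_right 2).eq]
    _ = y * cliffordGamma x y := by
        simp only [cliffordGamma]
        noncomm_ring

theorem cubePolar_pow_two_right (x y : B) (h : Commute (cubePolar x y) y) :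
    cubePolar x (y ^ 2) = cubePolar y x * x - cliffordGamma x y := by
  rw [cliffordGamma_eq_of_commute h]
  simp only [cubePolar]
  noncomm_ring

theorem cubePolar_add_right (x y z : B) :
    cubePolar x (y + z) = cubePolar x y + cubePolar x z := by
  simp only [cubePolar]
  noncomm_ring

theorem cubePolar_smul_right (r : R) (x y : B) : cubePolar x (r • y) = r • cubePolar x y := by
  simp only [cubePolar, mul_smul_comm, smul_mul_assoc, smul_add]

theorem cubePolar_mul_of_commute_left {x z : B} (h : Commute x z) (y : B) :
    cubePolar x (z * y) = z * cubePolar x y := by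
  simp only [cubePolar, mul_add, ← mul_assoc, h.eq, (h.pow_left 2).eq]

theorem cubePolar_mul_of_commute_right {x z : B} (h : Commute x z) (y : B) :
    cubePolar x (y * z) = cubePolar x y * z := by
  simp only [cubePolar, add_mul, mul_assoc, h.eq, (h.pow_left 2).eq]

theorem cubePolar_of_commute {x y : B} (h : Commute x y) : cubePolar x y = 3 • (y * x ^ 2) := by
  simp only [cubePolar, (h.pow_left 2).eq, h.eq, mul_assoc, ← pow_two]
  noncomm_ring

theorem mul_cubeResolvent {ζ : R} (hζ : ζ ^ 3 = 1) {x y : B} (h : Commute (x ^ 3) y) :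
    x * cubeResolvent ζ x y = ζ • (cubeResolvent ζ x y * x) := by
  have hl : x * cubeResolvent ζ x y =
      x ^ 3 * y + ζ • (x ^ 2 * y * x) + ζ ^ 2 • (x * y * x ^ 2) := by
    simp only [cubeResolvent, mul_add, mul_smul_comm]
    noncomm_ring
  have hr : cubeResolvent ζ x y * x =
      x ^ 2 * y * x + ζ • (x * y * x ^ 2) + ζ ^ 2 • (y * x ^ 3) := by
    simp only [cubeResolvent, add_mul, smul_mul_assoc]
    noncomm_ring
  rw [hl, hr, h.eq]
  linear_combination (norm := module) (-hζ) • (y * x ^ 3)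

theorem right_mul_cubeResolvent {ζ : R} (hζ : ζ ^ 3 = 1) {x y : B}
    (h : Commute (cubePolar x y) y) :
    y * cubeResolvent ζ x y =
      ζ • (cubeResolvent ζ x y * y) + (ζ - ζ ^ 2) • cliffordGamma x y := by
  have hl : y * cubeResolvent ζ x y =
      y * x ^ 2 * y + ζ • (y * x) ^ 2 + ζ ^ 2 • (y ^ 2 * x ^ 2) := by
    simp only [cubeResolvent, mul_add, mul_smul_comm]
    noncomm_ring
  have hr : cubeResolvent ζ x y * y =
      x ^ 2 * y ^ 2 + ζ • (x * y) ^ 2 + ζ ^ 2 • (y * x ^ 2 * y) := by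
    simp only [cubeResolvent, add_mul, smul_mul_assoc]
    noncomm_ring
  have hγ : (y * x) ^ 2 = cliffordGamma x y + x ^ 2 * y ^ 2 := by
    rw [cliffordGamma_eq_of_commute h, sub_add_cancel]
  have hγ' : (x * y) ^ 2 = cliffordGamma x y + y ^ 2 * x ^ 2 := sub_add_cancel _ _ |>.symm
  rw [hl, hr, hγ, hγ']
  linear_combination (norm := module) (-hζ) • (y * x ^ 2 * y)

theorem commute_pow_three_of_mul_eq_smul_add {ζ : R} (hζ : ζ ^ 2 + ζ + 1 = 0) {u y c : B}
    (hc : Commute c u) (h : y * u = ζ • (u * y) + c) : Commute (u ^ 3) y := by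
  have h2 : y * u ^ 2 = ζ ^ 2 • (u ^ 2 * y) + (ζ + 1) • (u * c) := by
    calc y * u ^ 2 = y * u * u := by rw [sq, mul_assoc]
      _ = (ζ • (u * y) + c) * u := by rw [h]
      _ = ζ • (u * (y * u)) + u * c := by rw [add_mul, smul_mul_assoc, mul_assoc, hc.eq]
      _ = ζ • (u * (ζ • (u * y) + c)) + u * c := by rw [h]
      _ = ζ ^ 2 • (u ^ 2 * y) + (ζ + 1) • (u * c) := by
          rw [mul_add, mul_smul_comm, ← mul_assoc, ← sq]
          module
  have h3 : y * u ^ 3 = ζ ^ 3 • (u ^ 3 * y) + (ζ ^ 2 + ζ + 1) • (u ^ 2 * c) := by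
    calc y * u ^ 3 = y * u ^ 2 * u := by rw [pow_succ, mul_assoc]
      _ = (ζ ^ 2 • (u ^ 2 * y) + (ζ + 1) • (u * c)) * u := by rw [h2]
      _ = ζ ^ 2 • (u ^ 2 * (y * u)) + (ζ + 1) • (u ^ 2 * c) := by
          simp only [add_mul, smul_mul_assoc, mul_assoc, hc.eq, sq]
      _ = ζ ^ 2 • (u ^ 2 * (ζ • (u * y) + c)) + (ζ + 1) • (u ^ 2 * c) := by rw [h]
      _ = ζ ^ 3 • (u ^ 3 * y) + (ζ ^ 2 + ζ + 1) • (u ^ 2 * c) := by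
          rw [mul_add, mul_smul_comm, ← mul_assoc, ← pow_succ]
          module
  rw [hζ, zero_smul, add_zero, cube_eq_one_of_sq_add_add_one hζ, one_smul] at h3
  exact h3.symm

section Omega

variable {ω : R}

theorem three_smul_sq_mul_eq (hω : ω ^ 2 + ω + 1 = 0) (x y : B) :
    3 • (x ^ 2 * y) = cubePolar x y + cubeResolvent ω x y + cubeResolvent (ω ^ 2) x y := by
  symm
  simp only [cubePolar, cubeResolvent]
  linear_combination (norm := module)
    hω • (x * y * x) + ((ω ^ 2 - ω + 1) * hω) • (y * x ^ 2)

theorem three_smul_mul_mul_eq (hω : ω ^ 2 + ω + 1 = 0) (x y : B) :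
    3 • (x * y * x) =
      cubePolar x y + ω ^ 2 • cubeResolvent ω x y + ω • cubeResolvent (ω ^ 2) x y := by
  symm
  have hω3 := cube_eq_one_of_sq_add_add_one hω
  simp only [cubePolar, cubeResolvent]
  linear_combination (norm := module)
    hω • (x ^ 2 * y) + (2 * hω3) • (x * y * x) + (hω + (ω + ω ^ 2) * hω3) • (y * x ^ 2)

theorem three_smul_mul_sq_eq (hω : ω ^ 2 + ω + 1 = 0) (x y : B) :
    3 • (y * x ^ 2) =
      cubePolar x y + ω • cubeResolvent ω x y + ω ^ 2 • cubeResolvent (ω ^ 2) x y := by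
  symm
  have hω3 := cube_eq_one_of_sq_add_add_one hω
  simp only [cubePolar, cubeResolvent]
  linear_combination (norm := module)
    hω • (x ^ 2 * y) + (hω + ω * hω3) • (x * y * x) + ((2 + ω ^ 3) * hω3) • (y * x ^ 2)

theorem mul_eq_sq_smul_of_mul_eq_smul (hω : ω ^ 3 = 1) {x u : B} (h : x * u = ω • (u * x)) :
    u * x = ω ^ 2 • (x * u) := by
  rw [h, smul_smul, ← pow_succ, hω, one_smul]

theorem mul_sq_eq_sq_smul {x u : B} (h : x * u = ω • (u * x)) :
    x * u ^ 2 = ω ^ 2 • (u ^ 2 * x) := by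
  rw [sq, ← mul_assoc, h, smul_mul_assoc, mul_assoc, h, mul_smul_comm, smul_smul, mul_assoc, ← sq]

theorem mul_sq_eq_smul_of_mul_eq_smul (hω : ω ^ 3 = 1) {x u : B} (h : x * u = ω • (u * x)) :
    u * x ^ 2 = ω • (x ^ 2 * u) := by
  rw [mul_sq_eq_sq_smul (mul_eq_sq_smul_of_mul_eq_smul hω h)]
  linear_combination (norm := module) (ω * hω) • (x ^ 2 * u)

theorem mul_cubeResolvent_sq_of_mul_eq_smul (hω : ω ^ 3 = 1) {x u : B}
    (h : x * u = ω • (u * x)) (y : B) :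
    u * cubeResolvent (ω ^ 2) x y = ω • cubePolar x (u * y) := by
  have hexp : u * cubeResolvent (ω ^ 2) x y =
      u * x ^ 2 * y + ω ^ 2 • (u * x * y * x) + (ω ^ 2) ^ 2 • (u * y * x ^ 2) := by
    simp only [cubeResolvent, mul_add, mul_smul_comm, mul_assoc]
  rw [hexp, mul_eq_sq_smul_of_mul_eq_smul hω h, mul_sq_eq_smul_of_mul_eq_smul hω h]
  simp only [cubePolar, smul_mul_assoc, mul_assoc]
  linear_combination (norm := module)
    (ω * hω) • (x * (u * (y * x)) + u * (y * x ^ 2))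

-- Noncommutative form of the factorization of `a ^ 3 + u ^ 3 + v ^ 3 - 3 * a * u * v`.
theorem mul_mul_eq_cube_add_cube_add_algebraMap (hω : ω ^ 2 + ω + 1 = 0) {u v m : B} {a n : R}
    (hum : u * m = ω • (m * u)) (hvm : v * m = ω ^ 2 • (m * v))
    (huv : u * v = algebraMap R B n + (3 * ω ^ 2) • m)
    (hvu : v * u = algebraMap R B n + (3 * ω) • m) :
    (algebraMap R B a + ω • u + ω ^ 2 • v) * (algebraMap R B a + ω ^ 2 • u + ω • v) *
        (algebraMap R B a + u + v) =
      u ^ 3 + v ^ 3 + algebraMap R B (a ^ 3 - 3 * a * n) := by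
  have hω3 := cube_eq_one_of_sq_add_add_one hω
  simp only [Algebra.algebraMap_eq_smul_one] at huv hvu ⊢
  have h2 : (a • (1 : B) + ω • u + ω ^ 2 • v) * (a • 1 + ω ^ 2 • u + ω • v) =
      (a ^ 2 - n) • 1 - 3 • m - a • (u + v) + u ^ 2 + v ^ 2 := by
    have hexp : (a • (1 : B) + ω • u + ω ^ 2 • v) * (a • 1 + ω ^ 2 • u + ω • v) =
        a ^ 2 • 1 + (a * (ω ^ 2 + ω)) • (u + v) + ω ^ 3 • (u ^ 2 + v ^ 2) + ω ^ 2 • (u * v)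
        + ω ^ 4 • (v * u) := by
      simp only [add_mul, mul_add, smul_mul_assoc, mul_smul_comm, one_mul, mul_one, sq u, sq v]
      module
    rw [hexp, huv, hvu]
    linear_combination (norm := module) (n * (hω + ω * hω3)) • (1 : B)
      + (3 * (hω + (ω + ω ^ 2) * hω3)) • m + (a * hω) • (u + v) + hω3 • (u ^ 2 + v ^ 2)
  have huuv : u ^ 2 * v = n • u + 3 • (m * u) := by
    rw [sq, mul_assoc, huv, mul_add, mul_smul_comm, mul_smul_comm, mul_one, hum]
    linear_combination (norm := module) (3 * hω3) • (m * u)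
  have hvvu : v ^ 2 * u = n • v + 3 • (m * v) := by
    rw [sq, mul_assoc, hvu, mul_add, mul_smul_comm, mul_smul_comm, mul_one, hvm]
    linear_combination (norm := module) (3 * hω3) • (m * v)
  have hexp : ((a ^ 2 - n) • (1 : B) - 3 • m - a • (u + v) + u ^ 2 + v ^ 2) * (a • 1 + u + v) =
      (a ^ 3 - a * n) • 1 - (3 * a) • m - n • (u + v) - 3 • (m * u + m * v)
        - a • (u * v + v * u) + u ^ 3 + v ^ 3 + u ^ 2 * v + v ^ 2 * u := by
    simp only [add_mul, sub_mul, mul_add, smul_mul_assoc, mul_smul_comm, one_mul, mul_one,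
      pow_succ, pow_zero]
    module
  rw [h2, hexp, huuv, hvvu, huv, hvu]
  linear_combination (norm := module) (-3 * a * hω) • m

end Omega

section CliffordPair

/-- Elements `x` and `y` with `(x + z * y) ^ 3 = f z` for scalars `z`, where the four coefficients
of the cubic `f` are matched one by one. -/
structure IsCliffordPair (f : Cubic R) (x y : B) : Prop where
  cube_left : x ^ 3 = algebraMap R B f.d
  polar_left : cubePolar x y = algebraMap R B f.c
  polar_right : cubePolar y x = algebraMap R B f.b
  cube_right : y ^ 3 = algebraMap R B f.a

namespace IsCliffordPair

variable {f : Cubic R} {x y : B}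

theorem shift (h : IsCliffordPair f x y) (z : R) :
    IsCliffordPair (cubicShift z f) (x + z • y) y where
  cube_left := by
    have hexp : (x + z • y) ^ 3 =
        x ^ 3 + z • cubePolar x y + z ^ 2 • cubePolar y x + z ^ 3 • y ^ 3 := by
      simp only [cubePolar, pow_succ, pow_zero, one_mul, mul_add, add_mul, smul_mul_assoc,
        mul_smul_comm, mul_assoc]
      module
    rw [hexp, h.cube_left, h.polar_left, h.polar_right, h.cube_right]
    simp only [Algebra.smul_def, cubicShift, map_add, map_mul]
  polar_left := by
    have hexp : cubePolar (x + z • y) y =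
        cubePolar x y + (2 * z) • cubePolar y x + (3 * z ^ 2) • y ^ 3 := by
      simp only [cubePolar, pow_succ, pow_zero, one_mul, mul_add, add_mul, smul_mul_assoc,
        mul_smul_comm, mul_assoc]
      module
    rw [hexp, h.polar_left, h.polar_right, h.cube_right]
    simp only [Algebra.smul_def, cubicShift, map_add, map_mul]
  polar_right := by
    have hexp : cubePolar y (x + z • y) = cubePolar y x + (3 * z) • y ^ 3 := by
      simp only [cubePolar, pow_succ, pow_zero, one_mul, mul_add, add_mul, smul_mul_assoc,
        mul_smul_comm, mul_assoc]
      module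
    rw [hexp, h.polar_right, h.cube_right]
    simp only [Algebra.smul_def, cubicShift, map_add, map_mul]
  cube_right := h.cube_right

theorem commute_cube_left (h : IsCliffordPair f x y) (b : B) : Commute (x ^ 3) b :=
  h.cube_left ▸ Algebra.commutes f.d b

theorem commute_cube_right (h : IsCliffordPair f x y) (b : B) : Commute (y ^ 3) b :=
  h.cube_right ▸ Algebra.commutes f.a b

theorem commute_polar_left (h : IsCliffordPair f x y) (b : B) : Commute (cubePolar x y) b :=
  h.polar_left ▸ Algebra.commutes f.c b

theorem commute_gamma_left (h : IsCliffordPair f x y) : Commute (cliffordGamma x y) x :=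
  commute_cliffordGamma_left (h.commute_cube_left y) (h.commute_polar_left y)

theorem commute_gamma_right (h : IsCliffordPair f x y) : Commute (cliffordGamma x y) y :=
  commute_cliffordGamma_right (h.commute_cube_right x) (h.commute_polar_left y)

theorem commute_gamma_resolvent (h : IsCliffordPair f x y) (ζ : R) :
    Commute (cliffordGamma x y) (cubeResolvent ζ x y) := by
  have hx := h.commute_gamma_left
  have hy := h.commute_gamma_right
  exact (((hx.pow_right 2).mul_right hy).add_right
    (((hx.mul_right hy).mul_right hx).smul_right ζ)).add_right
    ((hy.mul_right (hx.pow_right 2)).smul_right _)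

theorem commute_resolvent_cube_left (h : IsCliffordPair f x y) {ζ : R} (hζ : ζ ^ 2 + ζ + 1 = 0) :
    Commute (cubeResolvent ζ x y ^ 3) x := by
  refine commute_pow_three_of_mul_eq_smul_add hζ (Commute.zero_left _) ?_
  rw [add_zero]
  exact mul_cubeResolvent (cube_eq_one_of_sq_add_add_one hζ) (h.commute_cube_left y)

theorem commute_resolvent_cube_right (h : IsCliffordPair f x y) {ζ : R} (hζ : ζ ^ 2 + ζ + 1 = 0) :
    Commute (cubeResolvent ζ x y ^ 3) y :=
  commute_pow_three_of_mul_eq_smul_add hζ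
    ((h.commute_gamma_resolvent ζ).smul_left _)
    (right_mul_cubeResolvent (cube_eq_one_of_sq_add_add_one hζ) (h.commute_polar_left y))

section Omega

variable {ω : R}

theorem left_mul_resolvent (h : IsCliffordPair f x y) (hω : ω ^ 2 + ω + 1 = 0) :
    x * cubeResolvent ω x y = ω • (cubeResolvent ω x y * x) :=
  mul_cubeResolvent (cube_eq_one_of_sq_add_add_one hω) (h.commute_cube_left y)

theorem cubePolar_resolvent_mul (h : IsCliffordPair f x y) (hω : ω ^ 2 + ω + 1 = 0) :
    cubePolar x (cubeResolvent ω x y * y) =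
      (ω ^ 2 * (f.c ^ 2 - 3 * f.b * f.d)) • (1 : B) + (3 * ω) • (cliffordGamma x y * x ^ 2) := by
  have hγ : (x * y) ^ 2 = cliffordGamma x y + y ^ 2 * x ^ 2 := (sub_add_cancel _ _).symm
  have huy : cubeResolvent ω x y * y = (1 - ω ^ 2) • (x ^ 2 * y ^ 2) +
      (ω - ω ^ 2) • (cliffordGamma x y + y ^ 2 * x ^ 2) + ω ^ 2 • (cubePolar x y * y) := by
    rw [← hγ]
    simp only [cubeResolvent, cubePolar, pow_succ, pow_zero, one_mul, add_mul, smul_mul_assoc,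
      mul_assoc]
    module
  have hy2 : cubePolar x (y ^ 2) = f.b • x - cliffordGamma x y := by
    rw [cubePolar_pow_two_right _ _ (h.commute_polar_left y), h.polar_right, Algebra.smul_def]
  have hx2 : Commute x (x ^ 2) := (Commute.refl x).pow_right 2
  have hbd : x ^ 2 * (f.b • x) = (f.b * f.d) • (1 : B) := by
    rw [mul_smul_comm, ← pow_succ, h.cube_left, Algebra.algebraMap_eq_smul_one, smul_smul]
  have hbd' : f.b • x * x ^ 2 = (f.b * f.d) • (1 : B) := by
    rw [smul_mul_assoc, ← pow_succ', h.cube_left, Algebra.algebraMap_eq_smul_one, smul_smul]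
  have hγx : x ^ 2 * cliffordGamma x y = cliffordGamma x y * x ^ 2 :=
    (h.commute_gamma_left.pow_right 2).symm.eq
  rw [huy, cubePolar_add_right, cubePolar_add_right, cubePolar_smul_right, cubePolar_smul_right,
    cubePolar_smul_right, cubePolar_add_right, cubePolar_mul_of_commute_left hx2,
    cubePolar_mul_of_commute_right hx2, cubePolar_of_commute h.commute_gamma_left.symm, hy2,
    cubePolar_mul_of_commute_left (h.commute_polar_left x).symm, mul_sub, sub_mul, hbd, hbd', hγx,
    h.polar_left, Algebra.algebraMap_eq_smul_one, smul_one_mul, smul_smul]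
  linear_combination (norm := module)
    (f.b * f.d * hω) • (1 : B) - hω • (cliffordGamma x y * x ^ 2)

theorem resolvent_mul_resolvent (h : IsCliffordPair f x y) (hω : ω ^ 2 + ω + 1 = 0) :
    cubeResolvent ω x y * cubeResolvent (ω ^ 2) x y =
      algebraMap R B (f.c ^ 2 - 3 * f.b * f.d) +
        (3 * ω ^ 2) • (cliffordGamma x y * x ^ 2) := by
  have hω3 := cube_eq_one_of_sq_add_add_one hω
  rw [mul_cubeResolvent_sq_of_mul_eq_smul hω3 (h.left_mul_resolvent hω),
    h.cubePolar_resolvent_mul hω, Algebra.algebraMap_eq_smul_one]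
  linear_combination (norm := module) ((f.c ^ 2 - 3 * f.b * f.d) * hω3) • (1 : B)

theorem resolvent_sq_mul_resolvent (h : IsCliffordPair f x y) (hω : ω ^ 2 + ω + 1 = 0) :
    cubeResolvent (ω ^ 2) x y * cubeResolvent ω x y =
      algebraMap R B (f.c ^ 2 - 3 * f.b * f.d) + (3 * ω) • (cliffordGamma x y * x ^ 2) := by
  have hω4 : (ω ^ 2) ^ 2 = ω := by linear_combination ω * cube_eq_one_of_sq_add_add_one hω
  have hω' : (ω ^ 2) ^ 2 + ω ^ 2 + 1 = 0 := by linear_combination hω + hω4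
  simpa only [hω4] using h.resolvent_mul_resolvent hω'

theorem resolvent_mul_gamma_mul (h : IsCliffordPair f x y) (hω : ω ^ 2 + ω + 1 = 0) :
    cubeResolvent ω x y * (cliffordGamma x y * x ^ 2) =
      ω • (cliffordGamma x y * x ^ 2 * cubeResolvent ω x y) := by
  rw [← mul_assoc, ← (h.commute_gamma_resolvent ω).eq, mul_assoc,
    mul_sq_eq_smul_of_mul_eq_smul (cube_eq_one_of_sq_add_add_one hω) (h.left_mul_resolvent hω),
    mul_smul_comm, mul_assoc]

theorem resolvent_cube_add_resolvent_cube (h : IsCliffordPair f x y)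
    (hω : ω ^ 2 + ω + 1 = 0) :
    cubeResolvent ω x y ^ 3 + cubeResolvent (ω ^ 2) x y ^ 3 =
      algebraMap R B (cubicCovariant f).d := by
  have hω4 : (ω ^ 2) ^ 2 = ω := by linear_combination ω * cube_eq_one_of_sq_add_add_one hω
  have hω' : (ω ^ 2) ^ 2 + ω ^ 2 + 1 = 0 := by linear_combination hω + hω4
  have hprod := mul_mul_eq_cube_add_cube_add_algebraMap hω (a := f.c) (h.resolvent_mul_gamma_mul hω)
    (h.resolvent_mul_gamma_mul hω') (h.resolvent_mul_resolvent hω)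
    (h.resolvent_sq_mul_resolvent hω)
  rw [← h.polar_left, ← three_smul_mul_sq_eq hω, ← three_smul_mul_mul_eq hω,
    ← three_smul_sq_mul_eq hω] at hprod
  have h27 : 3 • (y * x ^ 2) * 3 • (x * y * x) * 3 • (x ^ 2 * y) =
      algebraMap R B (27 * f.d ^ 2 * f.a) := by
    calc 3 • (y * x ^ 2) * 3 • (x * y * x) * 3 • (x ^ 2 * y) =
          27 • (y * x ^ 3 * (y * x ^ 3) * y) := by noncomm_ring
      _ = 27 • (x ^ 3 * x ^ 3 * y ^ 3) := by
          rw [← (h.commute_cube_left y).eq, mul_assoc (x ^ 3), ← mul_assoc y,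
            ← (h.commute_cube_left y).eq]
          noncomm_ring
      _ = algebraMap R B (27 * f.d ^ 2 * f.a) := by
          rw [h.cube_left, h.cube_right, ← map_mul, ← map_mul, ← map_nsmul]
          congr 1
          ring
  rw [h27] at hprod
  rw [← sub_eq_iff_eq_add.2 hprod, ← map_sub, cubicCovariant]
  congr 1
  ring

theorem smul_mem_adjoin_resolvent (h : IsCliffordPair f x y) (hω : ω ^ 2 + ω + 1 = 0) {G U : R}
    (hG : cliffordGamma x y = algebraMap R B G) (hU : cubeResolvent ω x y ^ 3 = algebraMap R B U) :
    (3 * f.d * U) • y ∈ Algebra.adjoin R {x, cubeResolvent ω x y} := by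
  set u := cubeResolvent ω x y
  set v := cubeResolvent (ω ^ 2) x y
  set S := Algebra.adjoin R {x, u}
  have hxS : x ∈ S := Algebra.subset_adjoin (Set.mem_insert _ _)
  have huS : u ∈ S := Algebra.subset_adjoin (Set.mem_insert_of_mem _ rfl)
  have huvS : u * v ∈ S := by
    rw [h.resolvent_mul_resolvent hω, hG]
    exact add_mem (S.algebraMap_mem _)
      (S.smul_mem (mul_mem (S.algebraMap_mem _) (pow_mem hxS 2)) _)
  have hvS : U • v ∈ S := by
    have hUv : U • v = u ^ 2 * (u * v) := by
      rw [Algebra.smul_def, ← hU, pow_succ, mul_assoc]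
    exact hUv ▸ mul_mem (pow_mem huS 2) huvS
  have hy : (3 * f.d * U) • y = x * (U • algebraMap R B f.c + U • u + U • v) := by
    calc (3 * f.d * U) • y = x * U • 3 • (x ^ 2 * y) := by
          have hxy : x * (x ^ 2 * y) = f.d • y := by
            rw [← mul_assoc, ← pow_succ', h.cube_left, ← Algebra.smul_def]
          rw [mul_smul_comm, mul_smul_comm, hxy]
          module
      _ = x * (U • algebraMap R B f.c + U • u + U • v) := by
          rw [three_smul_sq_mul_eq hω, h.polar_left, smul_add, smul_add]
  rw [hy]
  exact mul_mem hxS (add_mem (add_mem (S.smul_mem (S.algebraMap_mem _) _) (S.smul_mem huS _)) hvS)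

end Omega

theorem map {R' B' : Type*} [CommRing R'] [Ring B'] [Algebra R' B'] (h : IsCliffordPair f x y)
    {ψ : R →+* R'} {φ : B →+* B'} (hφ : ∀ r, φ (algebraMap R B r) = algebraMap R' B' (ψ r)) :
    IsCliffordPair (f.map ψ) (φ x) (φ y) where
  cube_left := by simp [Cubic.map, ← hφ, ← h.cube_left]
  polar_left := by simp [Cubic.map, ← hφ, ← h.polar_left, cubePolar]
  polar_right := by simp [Cubic.map, ← hφ, ← h.polar_right, cubePolar]
  cube_right := by simp [Cubic.map, ← hφ, ← h.cube_right]

end IsCliffordPair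

end CliffordPair

end Resolvent

section CubeSum

variable {R E : Type*} [CommRing R] [Ring E] [Algebra R E]

/-- The element `t ^ 3 + s * t ^ 2 + s ^ 2 * t`, which for commuting `s` and `t` with equal cubes
is annihilated by `s - t`. -/
def cubeSum (s t : E) : E :=
  t ^ 3 + s * t ^ 2 + s ^ 2 * t

theorem mul_cubeSum {s t : E} (hst : Commute s t) (h : s ^ 3 = t ^ 3) :
    s * cubeSum s t = t * cubeSum s t := by
  calc s * cubeSum s t = s * t ^ 3 + s ^ 2 * t ^ 2 + s ^ 3 * t := by
        simp only [cubeSum]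
        noncomm_ring
    _ = t ^ 4 + s * t ^ 3 + s ^ 2 * t ^ 2 := by
        rw [h, ← pow_succ]
        abel
    _ = t * cubeSum s t := by
        rw [cubeSum, mul_add, mul_add, ← mul_assoc, ← mul_assoc, ← hst.eq, ← pow_succ',
          mul_assoc, ← pow_succ', (hst.pow_left 2).symm.eq, mul_assoc, ← sq]

theorem commute_cubeSum {s t w : E} (hs : Commute w s) (ht : Commute w t) :
    Commute w (cubeSum s t) :=
  ((ht.pow_right 3).add_right (hs.mul_right (ht.pow_right 2))).add_right
    ((hs.pow_right 2).mul_right ht)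

theorem mul_cubeSum_of_mul_left_eq_smul {ζ : R} {s t w : E} (hs : w * s = ζ • (s * w))
    (ht : Commute w t) :
    w * cubeSum s t = (t ^ 3 + ζ • (s * t ^ 2) + ζ ^ 2 • (s ^ 2 * t)) * w := by
  simp only [cubeSum, mul_add, add_mul, ← mul_assoc, hs, mul_sq_eq_sq_smul hs, smul_mul_assoc]
  simp only [mul_assoc, ht.eq, (ht.pow_right 2).eq, (ht.pow_right 3).eq]

theorem mul_cubeSum_of_mul_right_eq_smul {ζ : R} (hζ : ζ ^ 3 = 1) {s t w : E} (hs : Commute w s)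
    (ht : w * t = ζ • (t * w)) :
    w * cubeSum s t = (t ^ 3 + ζ ^ 2 • (s * t ^ 2) + ζ • (s ^ 2 * t)) * w := by
  have ht2 : w * t ^ 2 = ζ ^ 2 • (t ^ 2 * w) := mul_sq_eq_sq_smul ht
  have ht3 : w * t ^ 3 = t ^ 3 * w := by
    rw [pow_succ, ← mul_assoc, ht2, smul_mul_assoc, mul_assoc, ht, mul_smul_comm, smul_smul,
      ← pow_succ, hζ, one_smul, mul_assoc]
  simp only [cubeSum, mul_add, add_mul, ← mul_assoc, hs.eq, (hs.pow_right 2).eq, ht3]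
  simp only [mul_assoc, ht, ht2, mul_smul_comm, smul_mul_assoc]

theorem cubePolar_eq_zero_of_mul_eq_smul {ζ : R} (hζ : ζ ^ 2 + ζ + 1 = 0) {w z : E}
    (h : w * z = ζ • (z * w)) : cubePolar w z = 0 := by
  have h2 : w ^ 2 * z = ζ ^ 2 • (z * w ^ 2) := by
    rw [sq, mul_assoc, h, mul_smul_comm, ← mul_assoc, h, smul_mul_assoc, smul_smul, mul_assoc,
      ← sq]
  rw [cubePolar, h2, h, smul_mul_assoc, mul_assoc, ← sq]
  linear_combination (norm := module) hζ • (z * w ^ 2)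

theorem cubePolar_cubeSum {ζ : R} (hζ : ζ ^ 2 + ζ + 1 = 0) {s t w : E}
    (hs : w * s = ζ • (s * w)) (ht : Commute w t) :
    cubePolar w (cubeSum s t) = 3 • (t ^ 3 * w ^ 2) := by
  have hs2 : w * s ^ 2 = ζ ^ 2 • (s ^ 2 * w) := mul_sq_eq_sq_smul hs
  have hζ' : (ζ ^ 2) ^ 2 + ζ ^ 2 + 1 = 0 := by linear_combination (ζ ^ 2 - ζ + 1) * hζ
  rw [cubeSum, cubePolar_add_right, cubePolar_add_right, cubePolar_of_commute (ht.pow_right 3),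
    cubePolar_mul_of_commute_right (ht.pow_right 2), cubePolar_mul_of_commute_right ht,
    cubePolar_eq_zero_of_mul_eq_smul hζ hs, cubePolar_eq_zero_of_mul_eq_smul hζ' hs2]
  simp only [zero_mul, add_zero]

theorem mul_cubePolar_cubeSum {ζ T W : R} (hζ : ζ ^ 2 + ζ + 1 = 0) {s t w : E}
    (hs : w * s = ζ • (s * w)) (ht : Commute w t) (hT : t ^ 3 = algebraMap R E T)
    (hW : w ^ 3 = algebraMap R E W) :
    w * cubePolar w (cubeSum s t) = algebraMap R E (3 * T * W) := by
  rw [cubePolar_cubeSum hζ hs ht, mul_smul_comm, ← mul_assoc, (ht.pow_right 3).eq, mul_assoc,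
    ← pow_succ', hT, hW, ← map_mul, ← map_nsmul, nsmul_eq_mul, Nat.cast_ofNat, mul_assoc]

theorem mul_cubeSum_mul_cubeSum {ω : R} (hω : ω ^ 3 = 1) {s t v w : E}
    (hvs : v * s = ω ^ 2 • (s * v)) (hwt : w * t = ω • (t * w)) (hvt : Commute v t)
    (hws : Commute w s) (hvw : Commute v w) (hcube : v ^ 3 = w ^ 3) :
    v * (cubeSum s t * cubeSum v w) = w * (cubeSum s t * cubeSum v w) := by
  have hω4 : (ω ^ 2) ^ 2 = ω := by linear_combination ω * hω
  rw [← mul_assoc, ← mul_assoc, mul_cubeSum_of_mul_left_eq_smul hvs hvt,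
    mul_cubeSum_of_mul_right_eq_smul hω hws hwt, hω4, mul_assoc, mul_assoc,
    mul_cubeSum hvw hcube]

end CubeSum

section Casimir

open TensorProduct MulOpposite

variable {R B : Type*} [CommRing R] [Ring B] [Algebra R B]

theorem mulLR_eq_mulLeftRight (t : B ⊗[R] Bᵐᵒᵖ) : mulLR R B t = AlgHom.mulLeftRight R B t := by
  induction t using TensorProduct.induction_on with
  | zero => simp only [map_zero]
  | tmul a b =>
    ext m
    simp [mulLR]
  | add p q hp hq => rw [map_add, map_add, hp, hq]

/-- The subalgebra of the elements of `B` whose left and right multiplications agree on the tensor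
`t`. -/
def balancedSubalgebra (t : B ⊗[R] Bᵐᵒᵖ) : Subalgebra R B where
  carrier := {b | b ⊗ₜ[R] (1 : Bᵐᵒᵖ) * t = (1 : B) ⊗ₜ[R] op b * t}
  mul_mem' {a b} ha hb := by
    rw [Set.mem_ofPred_eq] at ha hb ⊢
    have hleft : (a * b) ⊗ₜ[R] (1 : Bᵐᵒᵖ) = a ⊗ₜ 1 * b ⊗ₜ 1 := by simp
    have hright : (1 : B) ⊗ₜ[R] op (a * b) = 1 ⊗ₜ op b * 1 ⊗ₜ op a := by simp
    have hcomm : a ⊗ₜ[R] (1 : Bᵐᵒᵖ) * 1 ⊗ₜ op b = 1 ⊗ₜ op b * a ⊗ₜ 1 := by simp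
    rw [hleft, hright, mul_assoc, hb, ← mul_assoc, hcomm, mul_assoc, ha, mul_assoc]
  add_mem' {a b} ha hb := by
    rw [Set.mem_ofPred_eq] at ha hb ⊢
    rw [add_tmul, op_add, tmul_add, add_mul, add_mul, ha, hb]
  algebraMap_mem' r := by
    rw [Set.mem_ofPred_eq, Algebra.algebraMap_eq_smul_one, op_smul, op_one, smul_tmul]

theorem mem_balancedSubalgebra {t : B ⊗[R] Bᵐᵒᵖ} {b : B} :
    b ∈ balancedSubalgebra t ↔ b ⊗ₜ[R] (1 : Bᵐᵒᵖ) * t = (1 : B) ⊗ₜ[R] op b * t :=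
  Iff.rfl

theorem mem_balancedSubalgebra_smul {r : R} {t : B ⊗[R] Bᵐᵒᵖ} {b : B} :
    b ∈ balancedSubalgebra (r • t) ↔ r • b ∈ balancedSubalgebra t := by
  simp only [mem_balancedSubalgebra, op_smul, tmul_smul, ← smul_tmul', smul_mul_assoc,
    mul_smul_comm]

/-- Casimir tensors: the elements of `B ⊗ Bᵐᵒᵖ` on which left and right multiplication by every
element of `B` agree. -/
def IsCasimir (t : B ⊗[R] Bᵐᵒᵖ) : Prop :=
  ∀ b : B, b ⊗ₜ[R] (1 : Bᵐᵒᵖ) * t = (1 : B) ⊗ₜ[R] op b * t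

theorem isCasimir_of_adjoin_eq_top {s : Set B} (hs : Algebra.adjoin R s = ⊤)
    {t : B ⊗[R] Bᵐᵒᵖ} (h : s ⊆ balancedSubalgebra t) : IsCasimir t := fun b ↦
  Algebra.adjoin_le h (hs ▸ Algebra.mem_top : b ∈ Algebra.adjoin R s)

namespace IsCasimir

variable {t : B ⊗[R] Bᵐᵒᵖ}

theorem mul_right (h : IsCasimir t) (e : B ⊗[R] Bᵐᵒᵖ) : IsCasimir (t * e) := fun b ↦ by
  rw [← mul_assoc, h b, mul_assoc]

theorem mul_left_eq (h : IsCasimir t) (e : B ⊗[R] Bᵐᵒᵖ) (c : B) :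
    e * (c ⊗ₜ 1 * t) = (AlgHom.mulLeftRight R B e c) ⊗ₜ 1 * t := by
  induction e using TensorProduct.induction_on with
  | zero => simp
  | tmul p q =>
    have hsplit : p ⊗ₜ[R] q * c ⊗ₜ 1 = (p * c) ⊗ₜ 1 * 1 ⊗ₜ op q.unop := by simp
    rw [← mul_assoc, hsplit, mul_assoc, ← h, ← mul_assoc]
    simp
  | add p q hp hq => rw [add_mul, hp, hq, map_add, LinearMap.add_apply, add_tmul, add_mul]

theorem commute_mulLeftRight (h : IsCasimir t) (b c : B) :
    Commute c (AlgHom.mulLeftRight R B t b) := by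
  have hc := congrArg (fun e ↦ AlgHom.mulLeftRight R B e b) (h c)
  rw [commute_iff_eq]
  simpa [map_mul] using hc

theorem exists_linearMap [Algebra.IsCentral R B] [FaithfulSMul R B] (h : IsCasimir t) :
    ∃ f : B →ₗ[R] R, ∀ b, algebraMap R B (f b) = AlgHom.mulLeftRight R B t b := by
  have hinj : Function.Injective (Algebra.linearMap R B) := FaithfulSMul.algebraMap_injective R B
  have hrange (b : B) : AlgHom.mulLeftRight R B t b ∈ LinearMap.range (Algebra.linearMap R B) :=
    Algebra.mem_bot.1 (Algebra.IsCentral.out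
      (Subalgebra.mem_center_iff.2 fun c ↦ h.commute_mulLeftRight b c))
  refine ⟨(LinearEquiv.ofInjective _ hinj).symm ∘ₗ
    (AlgHom.mulLeftRight R B t).codRestrict _ hrange, fun b ↦ ?_⟩
  exact congrArg Subtype.val ((LinearEquiv.ofInjective _ hinj).apply_symm_apply ⟨_, hrange b⟩)

end IsCasimir

variable (R B) in
/-- The left ideal of `B ⊗ Bᵐᵒᵖ` generated by the Casimir tensors. -/
def casimirIdeal : Ideal (B ⊗[R] Bᵐᵒᵖ) :=
  Ideal.span {t | IsCasimir t}

theorem casimirIdeal_mul_mem_right {t : B ⊗[R] Bᵐᵒᵖ} (h : t ∈ casimirIdeal R B)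
    (e : B ⊗[R] Bᵐᵒᵖ) : t * e ∈ casimirIdeal R B := by
  induction h using Submodule.span_induction with
  | mem t ht => exact Ideal.subset_span (ht.mul_right e)
  | zero => simp only [zero_mul, zero_mem]
  | add t₁ t₂ _ _ h₁ h₂ =>
    rw [add_mul]
    exact add_mem h₁ h₂
  | smul c t _ ht =>
    rw [smul_mul_assoc]
    exact Submodule.smul_mem _ c ht

theorem cubePolar_mem_casimirIdeal {t : B ⊗[R] Bᵐᵒᵖ} (h : t ∈ casimirIdeal R B)
    (w : B ⊗[R] Bᵐᵒᵖ) : cubePolar w t ∈ casimirIdeal R B :=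
  add_mem (add_mem (Ideal.mul_mem_left _ _ h)
    (casimirIdeal_mul_mem_right (Ideal.mul_mem_left _ _ h) _)) (casimirIdeal_mul_mem_right h _)

theorem exists_sum_casimir_eq_one (h : (1 : B ⊗[R] Bᵐᵒᵖ) ∈ casimirIdeal R B) :
    ∃ (n : ℕ) (c : Fin n → B) (t : Fin n → B ⊗[R] Bᵐᵒᵖ),
      (∀ i, IsCasimir (t i)) ∧ ∑ i, c i ⊗ₜ[R] (1 : Bᵐᵒᵖ) * t i = 1 := by
  obtain ⟨n, e, t, hsum⟩ := Submodule.mem_span_set'.1 h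
  refine ⟨n, fun i ↦ AlgHom.mulLeftRight R B (e i) 1, fun i ↦ t i, fun i ↦ (t i).2, ?_⟩
  rw [← hsum]
  refine Finset.sum_congr rfl fun i _ ↦ ?_
  have hti : IsCasimir (t i).1 := (t i).2
  rw [← hti.mul_left_eq, ← Algebra.TensorProduct.one_def, one_mul, smul_eq_mul]

theorem isAzumaya_of_one_mem_casimirIdeal [Algebra.IsCentral R B] [FaithfulSMul R B]
    (h : (1 : B ⊗[R] Bᵐᵒᵖ) ∈ casimirIdeal R B) : IsAzumaya R B := by
  obtain ⟨n, c, t, ht, hsum⟩ := exists_sum_casimir_eq_one h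
  choose f hf using fun i ↦ (ht i).exists_linearMap
  have hdual (b : B) : ∑ i, f i b • c i = b := by
    have hb := congrArg (fun e ↦ AlgHom.mulLeftRight R B e b) hsum
    simp only [map_sum, LinearMap.sum_apply, map_mul, Module.End.mul_apply, ← hf, map_one,
      AlgHom.mulLeftRight_apply, unop_one, mul_one, Module.End.one_apply] at hb
    simpa only [Algebra.smul_def, Algebra.commutes] using hb
  have hsplit : Fintype.linearCombination R c ∘ₗ LinearMap.pi f = LinearMap.id :=
    LinearMap.ext hdual
  have hproj : Module.Projective R B := Module.Projective.of_split _ _ hsplit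
  have hfin : Module.Finite R B := Module.Finite.of_surjective (Fintype.linearCombination R c)
    fun b ↦ ⟨_, LinearMap.congr_fun hsplit b⟩
  refine { bij := ⟨?_, fun F ↦ ⟨∑ i, F (c i) ⊗ₜ[R] (1 : Bᵐᵒᵖ) * t i, ?_⟩⟩ }
  · rw [injective_iff_map_eq_zero]
    intro e he
    rw [← mul_one e, ← hsum, Finset.mul_sum]
    refine Finset.sum_eq_zero fun i _ ↦ ?_
    rw [(ht i).mul_left_eq, he, LinearMap.zero_apply, zero_tmul, zero_mul]
  · ext b
    conv_rhs => rw [← hdual b]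
    simp only [map_sum, map_smul]
    simp only [LinearMap.sum_apply, map_mul, Module.End.mul_apply, ← hf,
      AlgHom.mulLeftRight_apply, unop_one, mul_one, Algebra.smul_def, Algebra.commutes]

end Casimir

section SymbolTensor

open TensorProduct MulOpposite

variable {R B : Type*} [CommRing R] [Ring B] [Algebra R B]

variable (R) in
/-- When `x` and `u` generate a symbol algebra of degree three, this is `9 * x ^ 3 * u ^ 3` times
its separability idempotent. -/
def symbolTensor (x u : B) : B ⊗[R] Bᵐᵒᵖ :=
  cubeSum (x ⊗ₜ 1) (1 ⊗ₜ op x) * cubeSum (u ⊗ₜ 1) (1 ⊗ₜ op u)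

theorem commute_tmul_one_one_tmul (a : B) (b : Bᵐᵒᵖ) :
    Commute (a ⊗ₜ[R] (1 : Bᵐᵒᵖ)) ((1 : B) ⊗ₜ[R] b) := by
  simp [commute_iff_eq]

theorem tmul_one_pow_three_eq_algebraMap {x : B} {X : R} (hX : x ^ 3 = algebraMap R B X) :
    (x ⊗ₜ[R] (1 : Bᵐᵒᵖ)) ^ 3 = algebraMap R (B ⊗[R] Bᵐᵒᵖ) X := by
  rw [Algebra.TensorProduct.tmul_pow, hX, one_pow, Algebra.TensorProduct.algebraMap_apply]

theorem one_tmul_op_pow_three_eq_algebraMap {x : B} {X : R} (hX : x ^ 3 = algebraMap R B X) :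
    ((1 : B) ⊗ₜ[R] op x) ^ 3 = algebraMap R (B ⊗[R] Bᵐᵒᵖ) X := by
  rw [Algebra.TensorProduct.tmul_pow, ← op_pow, hX, one_pow,
    Algebra.TensorProduct.algebraMap_apply', MulOpposite.algebraMap_apply]

variable {ω X U : R} {x u : B}

theorem left_mem_balancedSubalgebra_symbolTensor (hX : x ^ 3 = algebraMap R B X) :
    x ∈ balancedSubalgebra (symbolTensor R x u) := by
  rw [mem_balancedSubalgebra, symbolTensor, ← mul_assoc, ← mul_assoc,
    mul_cubeSum (commute_tmul_one_one_tmul _ _)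
      ((tmul_one_pow_three_eq_algebraMap hX).trans (one_tmul_op_pow_three_eq_algebraMap hX).symm)]

theorem right_mem_balancedSubalgebra_symbolTensor (hω : ω ^ 3 = 1)
    (hxu : x * u = ω • (u * x)) (hU : u ^ 3 = algebraMap R B U) :
    u ∈ balancedSubalgebra (symbolTensor R x u) := by
  refine mul_cubeSum_mul_cubeSum hω ?_ ?_ (commute_tmul_one_one_tmul _ _)
    (commute_tmul_one_one_tmul _ _).symm (commute_tmul_one_one_tmul _ _)
    ((tmul_one_pow_three_eq_algebraMap hU).trans (one_tmul_op_pow_three_eq_algebraMap hU).symm)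
  · simp [mul_eq_sq_smul_of_mul_eq_smul hω hxu, smul_tmul']
  · simp [← op_mul, hxu, tmul_smul]

theorem isCasimir_smul_symbolTensor (hω : ω ^ 3 = 1) (hX : x ^ 3 = algebraMap R B X)
    (hU : u ^ 3 = algebraMap R B U) (hxu : x * u = ω • (u * x)) {r : R} {y : B}
    (hy : r • y ∈ Algebra.adjoin R {x, u}) (htop : Algebra.adjoin R {x, y} = ⊤) :
    IsCasimir (r • symbolTensor R x u) := by
  have hx := left_mem_balancedSubalgebra_symbolTensor (u := u) hX
  have hu := right_mem_balancedSubalgebra_symbolTensor hω hxu hU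
  have hadjoin : Algebra.adjoin R {x, u} ≤ balancedSubalgebra (symbolTensor R x u) :=
    Algebra.adjoin_le (Set.insert_subset hx (Set.singleton_subset_iff.2 hu))
  refine isCasimir_of_adjoin_eq_top htop (Set.insert_subset ?_ (Set.singleton_subset_iff.2 ?_))
  · exact mem_balancedSubalgebra_smul.2 (Subalgebra.smul_mem _ hx r)
  · exact mem_balancedSubalgebra_smul.2 (hadjoin hy)

theorem algebraMap_mem_casimirIdeal_of_smul_symbolTensor_mem (hω : ω ^ 2 + ω + 1 = 0)
    (hX : x ^ 3 = algebraMap R B X) (hU : u ^ 3 = algebraMap R B U) (hxu : x * u = ω • (u * x))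
    {r : R} (h : r • symbolTensor R x u ∈ casimirIdeal R B) :
    algebraMap R (B ⊗[R] Bᵐᵒᵖ) (r * (3 * X * U) ^ 2) ∈ casimirIdeal R B := by
  have hω3 := cube_eq_one_of_sq_add_add_one hω
  have hω' : (ω ^ 2) ^ 2 + ω ^ 2 + 1 = 0 := by linear_combination hω + ω * hω3
  set x₁ : B ⊗[R] Bᵐᵒᵖ := x ⊗ₜ 1
  set u₁ : B ⊗[R] Bᵐᵒᵖ := u ⊗ₜ 1
  set x₂ : B ⊗[R] Bᵐᵒᵖ := 1 ⊗ₜ op x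
  set u₂ : B ⊗[R] Bᵐᵒᵖ := 1 ⊗ₜ op u
  have hX₁ : x₁ ^ 3 = algebraMap R _ X := tmul_one_pow_three_eq_algebraMap hX
  have hX₂ : x₂ ^ 3 = algebraMap R _ X := one_tmul_op_pow_three_eq_algebraMap hX
  have hU₁ : u₁ ^ 3 = algebraMap R _ U := tmul_one_pow_three_eq_algebraMap hU
  have hU₂ : u₂ ^ 3 = algebraMap R _ U := one_tmul_op_pow_three_eq_algebraMap hU
  have hxu₁ : x₁ * u₁ = ω • (u₁ * x₁) := by simp [x₁, u₁, hxu, smul_tmul']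
  have hcomm : Commute u₁ (cubeSum u₁ u₂) :=
    commute_cubeSum (Commute.refl _) (commute_tmul_one_one_tmul _ _)
  have hremove_x : u₁ * cubePolar u₁ (r • symbolTensor R x u) =
      (r * (3 * X * U)) • cubeSum u₁ u₂ := by
    rw [symbolTensor, cubePolar_smul_right, cubePolar_mul_of_commute_right hcomm, mul_smul_comm,
      ← mul_assoc, mul_cubePolar_cubeSum hω' (mul_eq_sq_smul_of_mul_eq_smul hω3 hxu₁)
        (commute_tmul_one_one_tmul _ _) hX₂ hU₁, ← Algebra.smul_def, smul_smul]
  have hremove_u : x₁ * cubePolar x₁ ((r * (3 * X * U)) • cubeSum u₁ u₂) =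
      algebraMap R (B ⊗[R] Bᵐᵒᵖ) (r * (3 * X * U) ^ 2) := by
    rw [cubePolar_smul_right, mul_smul_comm,
      mul_cubePolar_cubeSum hω hxu₁ (commute_tmul_one_one_tmul _ _) hU₂ hX₁, Algebra.smul_def,
      ← map_mul]
    congr 1
    ring
  rw [← hremove_u, ← hremove_x]
  exact Ideal.mul_mem_left _ _ (cubePolar_mem_casimirIdeal
    (Ideal.mul_mem_left _ _ (cubePolar_mem_casimirIdeal h _)) _)

theorem IsCliffordPair.algebraMap_mem_casimirIdeal {f : Cubic R} {y : B}
    (h : IsCliffordPair f x y) (htop : Algebra.adjoin R {x, y} = ⊤) (hω : ω ^ 2 + ω + 1 = 0)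
    {G : R} (hG : cliffordGamma x y = algebraMap R B G)
    (hU : cubeResolvent ω x y ^ 3 = algebraMap R B U) :
    algebraMap R (B ⊗[R] Bᵐᵒᵖ) ((3 * f.d * U) ^ 3) ∈ casimirIdeal R B := by
  have hxu := h.left_mul_resolvent hω
  rw [pow_succ']
  exact algebraMap_mem_casimirIdeal_of_smul_symbolTensor_mem hω h.cube_left hU hxu
    (Ideal.subset_span (isCasimir_smul_symbolTensor (cube_eq_one_of_sq_add_add_one hω)
      h.cube_left hU hxu (h.smul_mem_adjoin_resolvent hω hG hU) htop))

end SymbolTensor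

section LocalGlobal

open TensorProduct

variable {R B : Type*} [CommRing R] [Ring B] [Algebra R B]

theorem adjoin_add_smul_pair (z : R) (x y : B) :
    Algebra.adjoin R {x + z • y, y} = Algebra.adjoin R {x, y} := by
  have hle (w : R) (a : B) : Algebra.adjoin R {a + w • y, y} ≤ Algebra.adjoin R {a, y} := by
    have hy : y ∈ Algebra.adjoin R {a, y} := Algebra.subset_adjoin (by simp)
    have ha : a ∈ Algebra.adjoin R {a, y} := Algebra.subset_adjoin (by simp)
    exact Algebra.adjoin_le (Set.insert_subset (add_mem ha (Subalgebra.smul_mem _ hy w))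
      (Set.singleton_subset_iff.2 hy))
  refine le_antisymm (hle z x) ?_
  simpa using hle (-z) (x + z • y)

theorem mem_center_of_adjoin_pair_eq_top {x y c : B} (htop : Algebra.adjoin R {x, y} = ⊤)
    (hx : Commute c x) (hy : Commute c y) : c ∈ Subalgebra.center R B := by
  refine Subalgebra.mem_center_iff.2 fun b ↦ ?_
  refine (Algebra.commute_of_mem_adjoin_of_forall_mem_commute (R := R) (s := {x, y})
    (htop ▸ Algebra.mem_top) ?_).symm
  rintro _ (rfl | rfl)
  exacts [hx, hy]

theorem exists_algebraMap_eq_of_commute [Algebra.IsCentral R B] {x y c : B}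
    (htop : Algebra.adjoin R {x, y} = ⊤) (hx : Commute c x) (hy : Commute c y) :
    ∃ r : R, c = algebraMap R B r := by
  have hc := mem_center_of_adjoin_pair_eq_top htop hx hy
  obtain ⟨r, hr⟩ := Algebra.mem_bot.1 (Algebra.IsCentral.out hc)
  exact ⟨r, hr.symm⟩

namespace IsCliffordPair

variable [Algebra.IsCentral R B] [FaithfulSMul R B] {f : Cubic R} {x y : B} {ω : R}

theorem mul_cubicCovariant_mem_radical (h : IsCliffordPair f x y)
    (htop : Algebra.adjoin R {x, y} = ⊤) (h3 : IsUnit (3 : R)) (hω : ω ^ 2 + ω + 1 = 0) :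
    f.d * (cubicCovariant f).d ∈
      ((casimirIdeal R B).comap (algebraMap R (B ⊗[R] Bᵐᵒᵖ))).radical := by
  have hω' : (ω ^ 2) ^ 2 + ω ^ 2 + 1 = 0 := by linear_combination (ω ^ 2 - ω + 1) * hω
  obtain ⟨G, hG⟩ :=
    exists_algebraMap_eq_of_commute htop h.commute_gamma_left h.commute_gamma_right
  obtain ⟨U, hU⟩ := exists_algebraMap_eq_of_commute htop (h.commute_resolvent_cube_left hω)
    (h.commute_resolvent_cube_right hω)
  obtain ⟨V, hV⟩ := exists_algebraMap_eq_of_commute htop (h.commute_resolvent_cube_left hω')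
    (h.commute_resolvent_cube_right hω')
  have hUV : U + V = (cubicCovariant f).d := by
    apply FaithfulSMul.algebraMap_injective R B
    rw [map_add, ← hU, ← hV, h.resolvent_cube_add_resolvent_cube hω]
  have hsum : 3 * f.d * U + 3 * f.d * V ∈
      ((casimirIdeal R B).comap (algebraMap R (B ⊗[R] Bᵐᵒᵖ))).radical :=
    add_mem ⟨3, h.algebraMap_mem_casimirIdeal htop hω hG hU⟩
      ⟨3, h.algebraMap_mem_casimirIdeal htop hω' hG hV⟩
  rwa [← mul_add, hUV, mul_assoc, Ideal.unit_mul_mem_iff_mem _ h3] at hsum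

theorem isAzumaya (h : IsCliffordPair f x y) (htop : Algebra.adjoin R {x, y} = ⊤)
    (h3 : IsUnit (3 : R)) (hω : ω ^ 2 + ω + 1 = 0) (hf : IsUnit f.discr) : IsAzumaya R B := by
  let I := (casimirIdeal R B).comap (algebraMap R (B ⊗[R] Bᵐᵒᵖ))
  have hI : I.radical = ⊤ := by
    refine ideal_eq_top_of_forall_eval_mul_eval_mem h3 hω hf fun z ↦ ?_
    rw [← cubicShift_d, ← cubicCovariant_cubicShift_d]
    exact (h.shift z).mul_cubicCovariant_mem_radical ((adjoin_add_smul_pair z x y).trans htop) h3 hω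
  apply isAzumaya_of_one_mem_casimirIdeal
  rw [← map_one (algebraMap R (B ⊗[R] Bᵐᵒᵖ)), ← Ideal.mem_comap]
  exact (Ideal.eq_top_iff_one I).1 (Ideal.radical_eq_top.1 hI)

end IsCliffordPair

end LocalGlobal

section CentralLocalization

variable {A B : Type*} [Ring A] [Ring B]

theorem isUnit_center_of_isUnit_coe {z : Subring.center B} (hz : IsUnit (z : B)) : IsUnit z := by
  obtain ⟨u, hu⟩ := hz
  have hinv : (↑u⁻¹ : B) ∈ Set.center B := Set.units_inv_mem_center (hu ▸ z.2)
  refine IsUnit.of_mul_eq_one (⟨_, hinv⟩ : Subring.center B) (Subtype.ext ?_)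
  rw [Subring.coe_mul, ← hu, Units.mul_inv, Subring.coe_one]

theorem isCentral_subring_center : Algebra.IsCentral (Subring.center B) B where
  out b hb :=
    Algebra.mem_bot.2 ⟨⟨b, Subring.mem_center_iff.2 (Subalgebra.mem_center_iff.1 hb)⟩, rfl⟩

theorem algebraMap_mem_subring_center {k : Type*} [CommRing k] [Algebra k A] (r : k) :
    algebraMap k A r ∈ Subring.center A :=
  Subring.mem_center_iff.2 fun a ↦ (Algebra.commutes r a).symm

variable {φ : A →+* B} {s : A}

theorem map_mem_center_of_forall_exists_mul_pow (hs : IsUnit (φ s))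
    (hfrac : ∀ b : B, ∃ (a : A) (n : ℕ), b * φ s ^ n = φ a) {z : A}
    (hz : z ∈ Subring.center A) : φ z ∈ Subring.center B := by
  rw [Subring.mem_center_iff] at hz ⊢
  intro b
  obtain ⟨a, n, hb⟩ := hfrac b
  refine (hs.pow n).mul_right_cancel ?_
  calc b * φ z * φ s ^ n = b * φ (z * s ^ n) := by rw [map_mul, map_pow, mul_assoc]
    _ = φ (a * z) := by rw [← hz, map_mul, map_pow, ← mul_assoc, hb, map_mul]
    _ = φ z * b * φ s ^ n := by rw [hz, map_mul, mul_assoc, hb]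

variable {k : Type*} [CommRing k] [Algebra k A]

theorem adjoin_image_eq_top_of_forall_exists_mul_pow (hs : IsUnit (φ s))
    (hfrac : ∀ b : B, ∃ (a : A) (n : ℕ), b * φ s ^ n = φ a) (hsA : s ∈ Subring.center A)
    {t : Set A} (ht : Algebra.adjoin k t = ⊤) :
    Algebra.adjoin (Subring.center B) (φ '' t) = ⊤ := by
  have hcenter {z : A} (hz : z ∈ Subring.center A) :=
    map_mem_center_of_forall_exists_mul_pow hs hfrac hz
  set S := Algebra.adjoin (Subring.center B) (φ '' t)
  have himage (a : A) : φ a ∈ S := by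
    have ha : a ∈ Algebra.adjoin k t := ht ▸ Algebra.mem_top
    induction ha using Algebra.adjoin_induction with
    | mem a ha => exact Algebra.subset_adjoin (Set.mem_image_of_mem φ ha)
    | algebraMap r => exact S.algebraMap_mem ⟨_, hcenter (algebraMap_mem_subring_center r)⟩
    | add a b _ _ ha hb => exact map_add φ a b ▸ add_mem ha hb
    | mul a b _ _ ha hb => exact map_mul φ a b ▸ mul_mem ha hb
  refine Algebra.eq_top_iff.2 fun b ↦ ?_
  obtain ⟨a, n, hb⟩ := hfrac b
  obtain ⟨w, hw⟩ := (isUnit_center_of_isUnit_coe (z := ⟨φ s, hcenter hsA⟩) hs).exists_right_inv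
  have hsw : φ s * (w : B) = 1 := congrArg Subtype.val hw
  have hbw : b = φ a * (w : B) ^ n := by
    have hcomm : Commute (φ s) (w : B) := Subring.mem_center_iff.1 w.2 _
    rw [← hb, mul_assoc, ← hcomm.mul_pow, hsw, one_pow, mul_one]
  exact hbw ▸ mul_mem (himage a) (pow_mem (S.algebraMap_mem w) n)

theorem IsCliffordPair.isAzumaya_center {f : Cubic (Subring.center A)} {x y : A}
    (h : IsCliffordPair f x y) (htop : Algebra.adjoin k {x, y} = ⊤)
    (h3 : IsUnit (3 : k)) {ω : k} (hω : ω ^ 2 + ω + 1 = 0)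
    (hunit : IsUnit (φ f.discr))
    (hfrac : ∀ b : B, ∃ (a : A) (n : ℕ), b * φ f.discr ^ n = φ a) :
    IsAzumaya (Subring.center B) B := by
  have := isCentral_subring_center (B := B)
  let ψ : Subring.center A →+* Subring.center B := φ.restrict _ _ fun z hz ↦
    map_mem_center_of_forall_exists_mul_pow hunit hfrac hz
  let χ : k →+* Subring.center B :=
    ψ.comp ((algebraMap k A).codRestrict _ algebraMap_mem_subring_center)
  have htopB : Algebra.adjoin (Subring.center B) {φ x, φ y} = ⊤ := by
    rw [← Set.image_pair]
    exact adjoin_image_eq_top_of_forall_exists_mul_pow hunit hfrac f.discr.2 htop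
  have h3B : IsUnit (3 : Subring.center B) := by simpa only [map_ofNat] using h3.map χ
  have hωB : χ ω ^ 2 + χ ω + 1 = 0 := by
    rw [← map_pow, ← map_add, ← map_one χ, ← map_add, hω, map_zero]
  have hdiscr : IsUnit (f.map ψ).discr := by
    rw [cubic_discr_map]
    exact isUnit_center_of_isUnit_coe hunit
  exact (h.map fun _ ↦ rfl).isAzumaya htopB h3B hωB hdiscr

end CentralLocalization

section GenericClifford

variable (k : Type*) [Field k]

theorem adjoin_gx_gy : Algebra.adjoin k {gx k, gy k} = ⊤ := by
  have hrange : {gx k, gy k} =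
      RingQuot.mkAlgHom k (GCRel k) '' Set.range (FreeAlgebra.ι k (X := Fin 2)) := by
    ext a
    simp [gx, gy, Fin.exists_fin_two, eq_comm]
  rw [hrange, ← AlgHom.map_adjoin, FreeAlgebra.adjoin_range_ι, Algebra.map_top,
    AlgHom.range_eq_top]
  exact RingQuot.mkAlgHom_surjective k (GCRel k)

variable {k}

theorem mem_center_of_commute_gx_gy {c : GCA k} (hx : Commute c (gx k)) (hy : Commute c (gy k)) :
    c ∈ Subring.center (GCA k) :=
  Subring.mem_center_iff.2 (Subalgebra.mem_center_iff.1
    (mem_center_of_adjoin_pair_eq_top (adjoin_gx_gy k) hx hy))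

variable (k)

theorem commute_gx_cube_gy : Commute (gx k ^ 3) (gy k) := by
  have h := RingQuot.mkAlgHom_rel k (GCRel.rel1 (k := k))
  simp only [map_mul, map_pow] at h
  exact h

theorem commute_gy_cube_gx : Commute (gy k ^ 3) (gx k) := by
  have h := RingQuot.mkAlgHom_rel k (GCRel.rel2 (k := k))
  simp only [map_mul, map_pow] at h
  exact h.symm

theorem gx_sq_mul_gy_sq_add : gx k ^ 2 * gy k ^ 2 + (gx k * gy k) ^ 2 =
    gy k ^ 2 * gx k ^ 2 + (gy k * gx k) ^ 2 := by
  have h := RingQuot.mkAlgHom_rel k (GCRel.rel3 (k := k))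
  simp only [map_add, map_mul, map_pow] at h
  exact h

theorem cubePolar_gx_gy : cubePolar (gx k) (gy k) = gα k := rfl

theorem cubePolar_gy_gx : cubePolar (gy k) (gx k) = gβ k := by
  simp only [cubePolar, gβ]
  abel

/-- The generic binary cubic `y ^ 3 * T ^ 3 + β * T ^ 2 + α * T + x ^ 3`, with coefficients in the
center of the generic Clifford algebra. -/
def genericCubic : Cubic (Subring.center (GCA k)) where
  a := ⟨gy k ^ 3, mem_center_of_commute_gx_gy (commute_gy_cube_gx k)
    ((Commute.refl _).pow_left 3)⟩
  b := ⟨gβ k, cubePolar_gy_gx k ▸ mem_center_of_commute_gx_gy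
    (commute_cubePolar_right (by rw [gx_sq_mul_gy_sq_add]))
    (commute_cubePolar_left (commute_gy_cube_gx k))⟩
  c := ⟨gα k, cubePolar_gx_gy k ▸ mem_center_of_commute_gx_gy
    (commute_cubePolar_left (commute_gx_cube_gy k))
    (commute_cubePolar_right (gx_sq_mul_gy_sq_add k))⟩
  d := ⟨gx k ^ 3, mem_center_of_commute_gx_gy ((Commute.refl _).pow_left 3)
    (commute_gx_cube_gy k)⟩

theorem coe_discr_genericCubic : ((genericCubic k).discr : GCA k) = gΔ k := by
  have hdiscr : (genericCubic k).discr =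
      -27 * ((genericCubic k).d ^ 2 * (genericCubic k).a ^ 2) +
        (genericCubic k).c ^ 2 * (genericCubic k).b ^ 2 +
        18 * ((genericCubic k).d * (genericCubic k).a) *
          ((genericCubic k).c * (genericCubic k).b) -
        4 * (genericCubic k).d * (genericCubic k).b ^ 3 -
        4 * (genericCubic k).a * (genericCubic k).c ^ 3 := by
    simp only [Cubic.discr]
    ring
  rw [hdiscr, gΔ, pow_mul (gx k) 3 2, pow_mul (gy k) 3 2]
  rfl

theorem isCliffordPair_gx_gy : IsCliffordPair (genericCubic k) (gx k) (gy k) where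
  cube_left := rfl
  polar_left := cubePolar_gx_gy k
  polar_right := cubePolar_gy_gx k
  cube_right := rfl

end GenericClifford

theorem stmt10_general (k : Type*) [Field k] (ω : k) (hω : IsPrimitiveRoot ω 3)
    (B : Type*) [Ring B] (φ : GCA k →+* B) (hunit : IsUnit (φ (gΔ k)))
    (hfrac : ∀ b : B, ∃ (a : GCA k) (n : ℕ), b * φ (gΔ k) ^ n = φ a) :
    Module.Finite (Subring.center B) B ∧
      Module.Projective (Subring.center B) B ∧
      FaithfulSMul (Subring.center B) B ∧
      Function.Bijective (mulLR (Subring.center B) B) := by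
  have h3 := three_ne_zero_of_isPrimitiveRoot hω
  rw [← coe_discr_genericCubic] at hunit hfrac
  have hB : IsAzumaya (Subring.center B) B :=
    (isCliffordPair_gx_gy k).isAzumaya_center (adjoin_gx_gy k) h3.isUnit
      ((isPrimitiveRoot_three_iff h3).1 hω) hunit hfrac
  refine ⟨inferInstance, inferInstance, inferInstance, ?_⟩
  simpa only [funext mulLR_eq_mulLeftRight] using hB.bij

theorem stmt10 (k : Type*) [Field k] (h2 : (2 : k) ≠ 0) (h3 : (3 : k) ≠ 0)
    (ω : k) (hω : IsPrimitiveRoot ω 3)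
    (B : Type*) [Ring B] (φ : GCA k →+* B)
    -- `(B, φ)` is the localization of `A` at the central multiplicative set of powers of `Δ_A`:
    (hunit : IsUnit (φ (gΔ k)))
    (hfrac : ∀ b : B, ∃ (a : GCA k) (n : ℕ), b * φ (gΔ k) ^ n = φ a)
    (hker : ∀ a : GCA k, φ a = 0 ↔ ∃ n : ℕ, gΔ k ^ n * a = 0) :
    -- `B = A_Δ` is an Azumaya algebra over its center:
    Module.Finite (Subring.center B) B ∧
      Module.Projective (Subring.center B) B ∧
      FaithfulSMul (Subring.center B) B ∧
      Function.Bijective (mulLR (Subring.center B) B) :=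
  stmt10_general k ω hω B φ hunit hfrac
end

section
/- Let k be any field and let f, g, h be polynomials in k[a,b,d] satisfying h³ = a·f³ + b·f²·g + d·g³. Then f = g = h = 0. -/
/-!
Fix a monomial order in which `b` is smaller than both `a` and `d`. Modulo third powers, the leading
monomials of `h ^ 3`, `a * f ^ 3` and `d * g ^ 3` are those of `1`, `a` and `d`, hence pairwise
distinct. The leading monomial of `b * f ^ 2 * g` is strictly below that of `a * f ^ 3` if `f` has
the larger degree, and strictly below that of `d * g ^ 3` otherwise. So unless `f = g = 0`, nothing
can cancel the leading term of the larger of `a * f ^ 3` and `d * g ^ 3`, and it is not the leading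
term of a cube.
-/

open MvPolynomial

section

open Finsupp (single)
open scoped MonomialOrder

variable {σ R : Type*}

lemma one_add_mul_ne_mul {n : ℕ} (hn : n ≠ 1) (u v : ℕ) : 1 + n * u ≠ n * v := by
  intro huv
  have hdvd : n ∣ 1 + n * u := huv ▸ dvd_mul_right n v
  exact hn (Nat.dvd_one.mp ((Nat.dvd_add_left (dvd_mul_right n u)).mp hdvd))

lemma single_one_add_nsmul_ne_nsmul {n : ℕ} (hn : n ≠ 1) (i : σ) (u v : σ →₀ ℕ) :
    single i 1 + n • u ≠ n • v :=
  fun huv ↦ one_add_mul_ne_mul hn (u i) (v i) (by simpa using DFunLike.congr_fun huv i)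

lemma single_one_add_nsmul_ne_single_one_add_nsmul {n : ℕ} (hn : n ≠ 1) {i j : σ} (hij : i ≠ j)
    (u v : σ →₀ ℕ) : single i 1 + n • u ≠ single j 1 + n • v :=
  fun huv ↦ one_add_mul_ne_mul hn (u i) (v i) (by simpa [hij] using DFunLike.congr_fun huv i)

section CommSemiring

variable [CommSemiring R] (m : MonomialOrder σ)

lemma ne_zero_of_degree_lt_degree {p q : MvPolynomial σ R} (h : m.degree q ≺[m] m.degree p) :
    p ≠ 0 := by
  rintro rfl
  exact (m.zero_le _).not_gt (by simpa using h)

lemma degree_mul_pow_mul_pow_lt {c p q : MvPolynomial σ R} {d : σ →₀ ℕ}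
    (hc : m.degree c ≺[m] d) (hqp : m.degree q ≼[m] m.degree p) (s t : ℕ) :
    m.degree (c * p ^ s * q ^ t) ≺[m] d + (s + t) • m.degree p := by
  calc m.toSyn (m.degree (c * p ^ s * q ^ t))
      ≤ m.toSyn (m.degree c) + m.toSyn (m.degree (p ^ s)) + m.toSyn (m.degree (q ^ t)) :=
        m.toSyn_degree_mul_le.trans (by gcongr; exact m.toSyn_degree_mul_le)
    _ ≤ m.toSyn (m.degree c) + s • m.toSyn (m.degree p) + t • m.toSyn (m.degree q) := by
        simp only [← map_nsmul]
        gcongr <;> exact m.degree_pow_le _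
    _ ≤ m.toSyn (m.degree c) + s • m.toSyn (m.degree p) + t • m.toSyn (m.degree p) := by
        gcongr
    _ < m.toSyn (d + (s + t) • m.degree p) := by
        rw [add_assoc, ← add_nsmul, map_add, map_nsmul]
        gcongr

end CommSemiring

variable [CommRing R] [IsReduced R] (m : MonomialOrder σ)

lemma degree_X_mul_pow {p : MvPolynomial σ R} (hp : p ≠ 0) (i : σ) (n : ℕ) :
    m.degree (X i * p ^ n) = single i 1 + n • m.degree p := by
  have : Nontrivial R :=
    not_subsingleton_iff_nontrivial.mp fun _ ↦ hp (Subsingleton.elim p 0)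
  rw [m.degree_mul_of_isRegular_left (by simp [isRegular_one]) (pow_ne_zero n hp), m.degree_pow,
    m.degree_X]

lemma degree_X_mul_pow_ne {n : ℕ} (hn : 1 < n) {i j : σ} (hij : i ≠ j) {p q : MvPolynomial σ R}
    (hpq : p ≠ 0 ∨ q ≠ 0) : m.degree (X i * p ^ n) ≠ m.degree (X j * q ^ n) := by
  have hn₀ : n ≠ 0 := by omega
  by_cases hp : p = 0
  · have hq : q ≠ 0 := hpq.resolve_left (not_not_intro hp)
    simp [hp, hn₀, degree_X_mul_pow m hq, eq_comm]
  by_cases hq : q = 0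
  · simp [hq, hn₀, degree_X_mul_pow m hp]
  rw [degree_X_mul_pow m hp, degree_X_mul_pow m hq]
  exact single_one_add_nsmul_ne_single_one_add_nsmul hn.ne' hij _ _

lemma pow_ne_X_mul_pow_add_of_degree_lt {n : ℕ} (hn : 1 < n) {i : σ} {p r : MvPolynomial σ R}
    (hr : m.degree r ≺[m] m.degree (X i * p ^ n)) (h : MvPolynomial σ R) :
    h ^ n ≠ X i * p ^ n + r := by
  intro H
  have hp : p ≠ 0 :=
    ne_zero_pow (by omega) (right_ne_zero_of_mul (ne_zero_of_degree_lt_degree m hr))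
  have hdeg := m.degree_add_of_lt hr
  rw [← H, m.degree_pow, degree_X_mul_pow m hp] at hdeg
  exact single_one_add_nsmul_ne_nsmul hn.ne' i _ _ hdeg.symm

lemma pow_ne_X_mul_pow_add_mul_add_X_mul_pow {s t : ℕ} (hst : 1 < s + t) {i j : σ}
    {c f g : MvPolynomial σ R} (hci : m.degree c ≺[m] single i 1)
    (hcj : m.degree c ≺[m] single j 1)
    (hlt : m.degree (X j * g ^ (s + t)) ≺[m] m.degree (X i * f ^ (s + t)))
    (h : MvPolynomial σ R) :
    h ^ (s + t) ≠ X i * f ^ (s + t) + c * f ^ s * g ^ t + X j * g ^ (s + t) := by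
  have hf : f ≠ 0 :=
    ne_zero_pow (by omega) (right_ne_zero_of_mul (ne_zero_of_degree_lt_degree m hlt))
  have hmid : m.degree (c * f ^ s * g ^ t) ≺[m] m.degree (X i * f ^ (s + t)) := by
    rcases le_or_gt (m.toSyn (m.degree g)) (m.toSyn (m.degree f)) with hgf | hfg
    · rw [degree_X_mul_pow m hf]
      exact degree_mul_pow_mul_pow_lt m hci hgf s t
    · have hg : g ≠ 0 := ne_zero_of_degree_lt_degree m hfg
      rw [mul_right_comm]
      refine (degree_mul_pow_mul_pow_lt m hcj hfg.le t s).trans ?_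
      rwa [add_comm t s, ← degree_X_mul_pow m hg]
  rw [add_assoc]
  exact pow_ne_X_mul_pow_add_of_degree_lt m hst
    (m.degree_add_le.trans_lt (max_lt hmid hlt)) h

theorem eq_zero_of_pow_eq_X_mul_pow_add_mul_add_X_mul_pow {s t : ℕ} (hst : 1 < s + t) {i j : σ}
    (hij : i ≠ j) {c f g h : MvPolynomial σ R} (hci : m.degree c ≺[m] single i 1)
    (hcj : m.degree c ≺[m] single j 1)
    (H : h ^ (s + t) = X i * f ^ (s + t) + c * f ^ s * g ^ t + X j * g ^ (s + t)) :
    f = 0 ∧ g = 0 ∧ h = 0 := by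
  have hfg : f = 0 ∧ g = 0 := by
    by_contra hne
    rw [not_and_or] at hne
    have hdeg := m.toSyn.injective.ne (degree_X_mul_pow_ne m hst hij hne)
    rcases hdeg.lt_or_gt with hlt | hlt
    · rw [add_comm s t] at hst hlt H
      refine pow_ne_X_mul_pow_add_mul_add_X_mul_pow m hst hcj hci hlt h ?_
      rw [H]
      ring
    · exact pow_ne_X_mul_pow_add_mul_add_X_mul_pow m hst hci hcj hlt h H
  obtain ⟨rfl, rfl⟩ := hfg
  have hst₀ : s + t ≠ 0 := by omega
  have hmid : (0 : MvPolynomial σ R) ^ s * 0 ^ t = 0 := by rw [← pow_add, zero_pow hst₀]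
  refine ⟨rfl, rfl, eq_zero_of_pow_eq_zero (n := s + t) ?_⟩
  simpa only [zero_pow hst₀, mul_assoc, hmid, mul_zero, add_zero] using H

end

theorem stmt12_general {R : Type*} [CommRing R] [IsReduced R] {s t : ℕ} (hst : 1 < s + t)
    (f g h : MvPolynomial (Fin 3) R)
    (H : h ^ (s + t) = X 0 * f ^ (s + t) + X 1 * f ^ s * g ^ t + X 2 * g ^ (s + t)) :
    f = 0 ∧ g = 0 ∧ h = 0 := by
  nontriviality R
  -- `MonomialOrder.lex` makes `X 2` the smallest variable, so `X 1` and `X 2` trade places.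
  let e : Equiv.Perm (Fin 3) := Equiv.swap 1 2
  have hinj := rename_injective (R := R) e e.injective
  have H' := congrArg (rename e) H
  have he : e 0 = 0 ∧ e 1 = 2 ∧ e 2 = 1 := by decide
  simp only [map_add, map_mul, map_pow, rename_X, he] at H'
  have hlex : ∀ i : Fin 3, i < 2 →
      MonomialOrder.lex.toSyn (MonomialOrder.lex.degree (X 2 : MvPolynomial (Fin 3) R)) <
        MonomialOrder.lex.toSyn (Finsupp.single i 1) := by
    intro i hi
    rw [MonomialOrder.degree_X, MonomialOrder.lex_lt_iff]
    exact Finsupp.Lex.single_lt_iff.mpr hi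
  simpa only [map_eq_zero_iff _ hinj] using
    eq_zero_of_pow_eq_X_mul_pow_add_mul_add_X_mul_pow MonomialOrder.lex hst (by decide)
      (hlex 0 (by decide)) (hlex 1 (by decide)) H'

theorem stmt12 (k : Type*) [Field k] (f g h : MvPolynomial (Fin 3) k)
    (H : h ^ 3 = X 0 * f ^ 3 + X 1 * f ^ 2 * g + X 2 * g ^ 3) :
    f = 0 ∧ g = 0 ∧ h = 0 :=
  stmt12_general (s := 2) (t := 1) (by norm_num) f g h (by simpa using H)
end
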